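/- Let I and L be positive integers, and for each i ∈ Fin I let p i : Fin L → ℝ≥0 be nonincreasing. Define the weight of a tuple u : Fin I → Fin L by W(u) = ∏_{i} p i (u i). Then for every natural number n with 1 ≤ n ≤ L^I there exists a finite set S of tuples in Fin I → Fin L with |S| = n such that: (a) the all-zero tuple belongs to S; (b) every element of S other than the all-zero tuple is the increment at some coordinate of some element of S; and (c) S consists of n maximal-weight tuples, i.e., for every u ∈ S and every tuple v ∉ S, W(v) ≤ W(u). (Correctness of the recursive selection method: for every n there is a set of n most likely candidates that is generated from the all-zero candidate by single-segment updates.) -/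

import Mathlib

/-!
The weight is antitone for the product order on tuples. For an antitone weight on a partial order
which is a well-quasi-order, a set of `n` maximal-weight elements can always be chosen to be a lower
set: grow it one element at a time, adding an element of largest remaining weight which is also
minimal among the remaining ones. Since increments are exactly the covering pairs of tuples, every
nonzero tuple of a lower set is the increment of a tuple of the same lower set.
-/

open scoped NNReal

theorem isLowerSet_insert_of_minimal_compl {α : Type*} [PartialOrder α] {s : Set α} {b : α}
    (hs : IsLowerSet s) (hb : Minimal (· ∈ sᶜ) b) : IsLowerSet (insert b s) := by
  rintro x y hyx (rfl | hx)
  · by_cases hy : y ∈ s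
    · exact .inr hy
    · exact .inl (hb.eq_of_le hy hyx)
  · exact .inr (hs hyx hx)

section MaxWeight

variable {α β : Type*}

/-- A set of maximal-weight elements: no element outside `s` is heavier than an element of `s`.
This is how a set of `n` most likely candidates is expressed in the presence of ties. -/
def IsMaxWeightSet [LE β] (W : α → β) (s : Set α) : Prop :=
  ∀ u ∈ s, ∀ v ∉ s, W v ≤ W u

theorem IsMaxWeightSet.insert [Preorder β] {W : α → β} {s : Set α} {b : α}
    (hs : IsMaxWeightSet W s) (hb : IsMaxOn W sᶜ b) : IsMaxWeightSet W (insert b s) := by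
  rintro u (rfl | hu) v hv
  · exact hb fun hvs => hv (.inr hvs)
  · exact hs u hu v fun hvs => hv (.inr hvs)

variable [LinearOrder β] {W : α → β}

theorem exists_minimal_isMaxOn [Preorder α] {s : Set α} (hW : AntitoneOn W s)
    (hs : s.IsPWO) (hne : s.Nonempty) : ∃ b, Minimal (· ∈ s) b ∧ IsMaxOn W s b := by
  have hpwo : ((OrderDual.toDual ∘ W) '' s).IsPWO := hs.image_of_monotoneOn hW.dual_right
  obtain ⟨m, hm⟩ := Set.IsPWO.exists_minimalFor _ s hpwo hne
  have hm_max : ∀ x ∈ s, W x ≤ W m := fun x hx => hm.le (j := x) hx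
  obtain ⟨b, hbm, hb⟩ := hs.exists_le_minimal hm.prop
  exact ⟨b, hb, fun x hx => (hm_max x hx).trans (hW hb.prop hm.prop hbm)⟩

theorem exists_finset_isLowerSet_isMaxWeightSet [PartialOrder α] [WellQuasiOrderedLE α]
    (hW : Antitone W) {n : ℕ} (hn : n ≤ ENat.card α) :
    ∃ S : Finset α, S.card = n ∧ IsLowerSet (S : Set α) ∧ IsMaxWeightSet W S := by
  classical
  induction n with
  | zero => exact ⟨∅, rfl, by simp [isLowerSet_empty], by simp [IsMaxWeightSet]⟩
  | succ k ih =>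
    obtain ⟨S, hcard, hlower, hmax⟩ := ih (le_trans (mod_cast k.le_succ) hn)
    have hne : (S : Set α)ᶜ.Nonempty := by
      refine Set.nonempty_compl.mpr fun huniv => ?_
      have hcard_univ : ENat.card α = k := by
        rw [← Set.encard_univ, ← huniv, Set.encard_coe_eq_coe_finsetCard, hcard]
      exact k.not_succ_le_self (Nat.cast_le.mp (hn.trans_eq hcard_univ))
    obtain ⟨b, hbmin, hbmax⟩ :=
      exists_minimal_isMaxOn (hW.antitoneOn _) (Set.isPWO_of_wellQuasiOrderedLE _) hne
    refine ⟨insert b S, by rw [Finset.card_insert_of_notMem hbmin.prop, hcard], ?_⟩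
    rw [Finset.coe_insert]
    exact ⟨isLowerSet_insert_of_minimal_compl hlower hbmin, hmax.insert hbmax⟩

theorem stmt_5_general [PartialOrder α] [WellQuasiOrderedLE α] [IsStronglyCoatomic α]
    (hW : Antitone W) {a : α} (ha : IsBot a) {n : ℕ} (hn1 : 1 ≤ n) (hn2 : n ≤ ENat.card α) :
    ∃ S : Finset α, S.card = n ∧ a ∈ S ∧ (∀ u ∈ S, u ≠ a → ∃ v ∈ S, v ⋖ u) ∧
      ∀ u ∈ S, ∀ v ∉ S, W v ≤ W u := by
  obtain ⟨S, hcard, hlower, hmax⟩ := exists_finset_isLowerSet_isMaxWeightSet hW hn2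
  refine ⟨S, hcard, ?_, fun u hu hne => ?_, hmax⟩
  · obtain ⟨u, hu⟩ := Finset.card_pos.mp (hcard ▸ hn1)
    exact hlower (ha u) hu
  · obtain ⟨v, -, hvu⟩ := exists_le_covBy_of_lt ((ha u).lt_of_ne' hne)
    exact ⟨v, hlower hvu.le hu, hvu⟩

end MaxWeight

theorem pi_fin_covBy_iff {ι : Type*} {L : ι → ℕ} {v u : ∀ i, Fin (L i)} :
    v ⋖ u ↔ ∃ i, (u i : ℕ) = v i + 1 ∧ ∀ j, j ≠ i → u j = v j := by
  simp only [Pi.covBy_iff, Fin.covBy_iff, Nat.covBy_iff_add_one_eq, eq_comm]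

/-- For every `1 ≤ n ≤ L ^ I` there is a set `S` of `n` maximal-weight
tuples containing the all-zero tuple such that every other element of `S` is the
increment at some coordinate of an element of `S`. -/
theorem stmt_5 (I L : ℕ) (hI : 1 ≤ I) (hL : 1 ≤ L)
    (p : Fin I → Fin L → ℝ≥0) (hp : ∀ i, Antitone (p i))
    (n : ℕ) (hn1 : 1 ≤ n) (hn2 : n ≤ L ^ I) :
    ∃ S : Finset (Fin I → Fin L),
      S.card = n ∧
      (fun _ => (⟨0, hL⟩ : Fin L)) ∈ S ∧
      (∀ u ∈ S, u ≠ (fun _ => (⟨0, hL⟩ : Fin L)) →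
        ∃ v ∈ S, ∃ i : Fin I,
          (u i : ℕ) = (v i : ℕ) + 1 ∧ ∀ j, j ≠ i → u j = v j) ∧
      (∀ u ∈ S, ∀ v : Fin I → Fin L, v ∉ S →
        (∏ i, p i (v i)) ≤ ∏ i, p i (u i)) := by
  have hW : Antitone fun u : Fin I → Fin L => ∏ i, p i (u i) := fun u v huv =>
    Finset.prod_le_prod' fun i _ => hp i (huv i)
  have hbot : IsBot fun _ : Fin I => (⟨0, hL⟩ : Fin L) := fun u i => Nat.zero_le (u i)
  have hcard : (n : ℕ∞) ≤ ENat.card (Fin I → Fin L) := by simpa using mod_cast hn2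
  simpa only [pi_fin_covBy_iff] using stmt_5_general hW hbot hn1 hcard
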